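/- Let K be an algebraically closed field of characteristic zero and let b₁, b₃ ≥ 1 be integers. Consider the derivations of the polynomial ring K[x₁,x₂,x₃,x₄] given by ∂₁ = x₃^{b₁}·∂/∂x₁ − x₃^{b₁−1}·(2x₁x₂⁴ + 1)·∂/∂x₄ and ∂₃ = x₃^{b₃}·∂/∂x₂ − 4x₁²x₂³x₃^{b₃−1}·∂/∂x₄. Then: (i) ∂₁ and ∂₃ are locally nilpotent; (ii) ∂₁(f) = ∂₃(f) = 0 for f = x₁ + x₁²x₂⁴ + x₃x₄, so both derivations preserve the principal ideal (x₁ + x₁²x₂⁴ + x₃x₄) and descend to derivations of the quotient ring R = K[x₁,x₂,x₃,x₄]/(x₁ + x₁²x₂⁴ + x₃x₄); (iii) ∂₁ and ∂₃ commute: ∂₁∘∂₃ = ∂₃∘∂₁ on K[x₁,x₂,x₃,x₄]. -/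

import Mathlib

/- STATEMENT 14: for integers `b₁, b₃ ≥ 1`, the derivations
`∂₁ = x₃^{b₁}·∂/∂x₁ − x₃^{b₁−1}·(2x₁x₂⁴+1)·∂/∂x₄` and
`∂₃ = x₃^{b₃}·∂/∂x₂ − 4x₁²x₂³x₃^{b₃−1}·∂/∂x₄` of `K[x₁,x₂,x₃,x₄]`
(i) are locally nilpotent, (ii) kill `f = x₁ + x₁²x₂⁴ + x₃x₄` and preserve
the principal ideal `(f)`, and (iii) commute. Here `xᵢ = X (i−1)` in
`MvPolynomial (Fin 4) K`. -/

noncomputable section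
open MvPolynomial

/-- `∂₁ = x₃^{b₁}·∂/∂x₁ − x₃^{b₁−1}·(2x₁x₂⁴ + 1)·∂/∂x₄`. -/
def del1 (K : Type*) [Field K] (b₁ : ℕ) :
    Derivation K (MvPolynomial (Fin 4) K) (MvPolynomial (Fin 4) K) :=
  ((X 2 ^ b₁ : MvPolynomial (Fin 4) K)) • pderiv (R := K) (0 : Fin 4)
    - ((X 2 ^ (b₁ - 1) * (2 * X 0 * X 1 ^ 4 + 1) : MvPolynomial (Fin 4) K))
        • pderiv (R := K) (3 : Fin 4)

/-- `∂₃ = x₃^{b₃}·∂/∂x₂ − 4x₁²x₂³x₃^{b₃−1}·∂/∂x₄`. -/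
def del3 (K : Type*) [Field K] (b₃ : ℕ) :
    Derivation K (MvPolynomial (Fin 4) K) (MvPolynomial (Fin 4) K) :=
  ((X 2 ^ b₃ : MvPolynomial (Fin 4) K)) • pderiv (R := K) (1 : Fin 4)
    - ((4 * X 0 ^ 2 * X 1 ^ 3 * X 2 ^ (b₃ - 1) : MvPolynomial (Fin 4) K))
        • pderiv (R := K) (3 : Fin 4)

namespace Derivation

variable {R A : Type*} [CommSemiring R] [CommSemiring A] [Algebra R A]

theorem map_ofNat (D : Derivation R A A) (n : ℕ) [n.AtLeastTwo] :
    D ofNat(n) = 0 := by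
  rw [← Nat.cast_ofNat (R := A), D.map_natCast]

theorem iterate_eq_zero_of_le (D : Derivation R A A) {m n : ℕ} (hmn : m ≤ n) {f : A}
    (hf : D^[m] f = 0) : D^[n] f = 0 := by
  obtain ⟨k, rfl⟩ := Nat.exists_eq_add_of_le' hmn
  rw [Function.iterate_add_apply, hf, iterate_map_zero]

theorem iterate_add_mul_eq_zero (D : Derivation R A A) :
    ∀ (m n : ℕ) {f g : A}, D^[m] f = 0 → D^[n] g = 0 → D^[m + n] (f * g) = 0
  | 0, n, f, g, hf, _ => by
    have hf' : f = 0 := hf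
    rw [hf', zero_mul, iterate_map_zero]
  | m + 1, 0, f, g, _, hg => by
    have hg' : g = 0 := hg
    rw [hg', mul_zero, iterate_map_zero]
  | m + 1, n + 1, f, g, hf, hg => by
    have h₁ := iterate_add_mul_eq_zero D (m + 1) n hf (g := D g) hg
    have h₂ := iterate_add_mul_eq_zero D m (n + 1) (f := D f) hf hg
    rw [← add_assoc, Function.iterate_succ_apply, D.leibniz, iterate_map_add, smul_eq_mul,
      smul_eq_mul, h₁, mul_comm g, show m + 1 + n = m + (n + 1) by omega, h₂, add_zero]

theorem apply_mem_span_singleton {A : Type*} [CommRing A] [Algebra R A] (D : Derivation R A A)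
    {f g : A} (hf : D f = 0) (hg : g ∈ Ideal.span {f}) : D g ∈ Ideal.span {f} := by
  obtain ⟨a, rfl⟩ := Ideal.mem_span_singleton.1 hg
  simp [hf, Ideal.mem_span_singleton]

end Derivation

theorem MvPolynomial.derivation_locally_nilpotent {σ R : Type*} [CommSemiring R]
    (D : Derivation R (MvPolynomial σ R) (MvPolynomial σ R))
    (hD : ∀ i, ∃ N, D^[N] (X i) = 0) (g : MvPolynomial σ R) :
    ∃ N : ℕ, 0 < N ∧ D^[N] g = 0 := by
  induction g using MvPolynomial.induction_on with
  | C a => exact ⟨1, one_pos, by simp⟩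
  | add p q hp hq =>
    obtain ⟨m, hm, hp⟩ := hp
    obtain ⟨n, -, hq⟩ := hq
    refine ⟨max m n, lt_max_of_lt_left hm, ?_⟩
    rw [iterate_map_add, D.iterate_eq_zero_of_le (le_max_left m n) hp,
      D.iterate_eq_zero_of_le (le_max_right m n) hq, add_zero]
  | mul_X p i hp =>
    obtain ⟨m, hm, hp⟩ := hp
    obtain ⟨n, hn⟩ := hD i
    exact ⟨m + n, by omega, D.iterate_add_mul_eq_zero m n hp hn⟩

section

variable (K : Type*) [Field K] (b : ℕ)

theorem del1_X_zero : del1 K b (X 0) = X 2 ^ b := by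
  simp [del1, pderiv_X]

theorem del1_X_one : del1 K b (X 1) = 0 := by
  simp [del1, pderiv_X]

theorem del1_X_two : del1 K b (X 2) = 0 := by
  simp [del1, pderiv_X]

theorem del1_X_three : del1 K b (X 3) = -(X 2 ^ (b - 1) * (2 * X 0 * X 1 ^ 4 + 1)) := by
  simp [del1, pderiv_X]

theorem del3_X_zero : del3 K b (X 0) = 0 := by
  simp [del3, pderiv_X]

theorem del3_X_one : del3 K b (X 1) = X 2 ^ b := by
  simp [del3, pderiv_X]

theorem del3_X_two : del3 K b (X 2) = 0 := by
  simp [del3, pderiv_X]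

theorem del3_X_three : del3 K b (X 3) = -(4 * X 0 ^ 2 * X 1 ^ 3 * X 2 ^ (b - 1)) := by
  simp [del3, pderiv_X]

theorem del1_locally_nilpotent (g : MvPolynomial (Fin 4) K) :
    ∃ N : ℕ, 0 < N ∧ (del1 K b)^[N] g = 0 := by
  refine derivation_locally_nilpotent _ (fun i => ⟨3, ?_⟩) g
  fin_cases i <;>
    simp [del1_X_zero, del1_X_one, del1_X_two, del1_X_three, Derivation.leibniz,
      Derivation.leibniz_pow, Derivation.map_ofNat]

theorem del3_locally_nilpotent (g : MvPolynomial (Fin 4) K) :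
    ∃ N : ℕ, 0 < N ∧ (del3 K b)^[N] g = 0 := by
  have h_one : (del3 K b)^[2] (X 1) = 0 := by
    rw [Function.iterate_succ_apply, del3_X_one, Function.iterate_one, Derivation.leibniz_pow,
      del3_X_two, smul_zero, smul_zero]
  have h_coeff : (del3 K b)^[1] (-(4 * X 0 ^ 2 * X 2 ^ (b - 1))) = 0 := by
    simp [del3_X_zero, del3_X_two, Derivation.leibniz, Derivation.leibniz_pow,
      Derivation.map_ofNat]
  have h_three : del3 K b (X 3) = -(4 * X 0 ^ 2 * X 2 ^ (b - 1)) * (X 1 * (X 1 * X 1)) := by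
    rw [del3_X_three]
    ring
  refine derivation_locally_nilpotent _ (Fin.forall_fin_succ.2 ⟨⟨1, del3_X_zero K b⟩,
    Fin.forall_fin_succ.2 ⟨⟨2, h_one⟩, Fin.forall_fin_succ.2 ⟨⟨1, del3_X_two K b⟩,
      Fin.forall_fin_one.2 ⟨1 + (2 + (2 + 2)) + 1, ?_⟩⟩⟩⟩) g
  change (del3 K b)^[1 + (2 + (2 + 2)) + 1] (X 3) = 0
  rw [Function.iterate_succ_apply, h_three]
  exact Derivation.iterate_add_mul_eq_zero _ _ _ h_coeff
    (Derivation.iterate_add_mul_eq_zero _ _ _ h_one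
      (Derivation.iterate_add_mul_eq_zero _ _ _ h_one h_one))

theorem del1_apply_trinomial (hb : 1 ≤ b) :
    del1 K b (X 0 + X 0 ^ 2 * X 1 ^ 4 + X 2 * X 3) = 0 := by
  obtain ⟨b, rfl⟩ := Nat.exists_eq_add_of_le' hb
  simp [del1_X_zero, del1_X_one, del1_X_two, del1_X_three, Derivation.leibniz,
    Derivation.leibniz_pow]
  ring

theorem del3_apply_trinomial (hb : 1 ≤ b) :
    del3 K b (X 0 + X 0 ^ 2 * X 1 ^ 4 + X 2 * X 3) = 0 := by
  obtain ⟨b, rfl⟩ := Nat.exists_eq_add_of_le' hb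
  simp [del3_X_zero, del3_X_one, del3_X_two, del3_X_three, Derivation.leibniz,
    Derivation.leibniz_pow]
  ring

theorem del1_del3_comm {b₁ b₃ : ℕ} (hb₁ : 1 ≤ b₁) (hb₃ : 1 ≤ b₃)
    (g : MvPolynomial (Fin 4) K) : del1 K b₁ (del3 K b₃ g) = del3 K b₃ (del1 K b₁ g) := by
  obtain ⟨b₁, rfl⟩ := Nat.exists_eq_add_of_le' hb₁
  obtain ⟨b₃, rfl⟩ := Nat.exists_eq_add_of_le' hb₃
  rw [← sub_eq_zero, ← Derivation.commutator_apply]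
  suffices h : ⁅del1 K (b₁ + 1), del3 K (b₃ + 1)⁆ = 0 by rw [h, Derivation.zero_apply]
  refine MvPolynomial.derivation_ext fun i => ?_
  fin_cases i <;>
    simp [Derivation.commutator_apply, del1_X_zero, del1_X_one, del1_X_two, del1_X_three,
      del3_X_zero, del3_X_one, del3_X_two, del3_X_three, Derivation.leibniz,
      Derivation.leibniz_pow, Derivation.map_ofNat]
  ring

end

theorem del1_del3_lnd_commute_preserve
    {K : Type*} [Field K] [IsAlgClosed K] [CharZero K]
    (b₁ b₃ : ℕ) (hb₁ : 1 ≤ b₁) (hb₃ : 1 ≤ b₃) :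
    -- (i) local nilpotency
    (∀ g : MvPolynomial (Fin 4) K, ∃ N : ℕ, 0 < N ∧ (⇑(del1 K b₁))^[N] g = 0)
    ∧ (∀ g : MvPolynomial (Fin 4) K, ∃ N : ℕ, 0 < N ∧ (⇑(del3 K b₃))^[N] g = 0)
    -- (ii) both kill f = x₁ + x₁²x₂⁴ + x₃x₄ and preserve the ideal (f)
    ∧ del1 K b₁ (X 0 + X 0 ^ 2 * X 1 ^ 4 + X 2 * X 3) = 0
    ∧ del3 K b₃ (X 0 + X 0 ^ 2 * X 1 ^ 4 + X 2 * X 3) = 0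
    ∧ (∀ g ∈ Ideal.span {(X 0 + X 0 ^ 2 * X 1 ^ 4 + X 2 * X 3 : MvPolynomial (Fin 4) K)},
        del1 K b₁ g ∈ Ideal.span {(X 0 + X 0 ^ 2 * X 1 ^ 4 + X 2 * X 3 : MvPolynomial (Fin 4) K)})
    ∧ (∀ g ∈ Ideal.span {(X 0 + X 0 ^ 2 * X 1 ^ 4 + X 2 * X 3 : MvPolynomial (Fin 4) K)},
        del3 K b₃ g ∈ Ideal.span {(X 0 + X 0 ^ 2 * X 1 ^ 4 + X 2 * X 3 : MvPolynomial (Fin 4) K)})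
    -- (iii) they commute
    ∧ (∀ g : MvPolynomial (Fin 4) K,
        del1 K b₁ (del3 K b₃ g) = del3 K b₃ (del1 K b₁ g)) := by
  exact ⟨del1_locally_nilpotent K b₁, del3_locally_nilpotent K b₃,
    del1_apply_trinomial K b₁ hb₁, del3_apply_trinomial K b₃ hb₃,
    fun _ hg => (del1 K b₁).apply_mem_span_singleton (del1_apply_trinomial K b₁ hb₁) hg,
    fun _ hg => (del3 K b₃).apply_mem_span_singleton (del3_apply_trinomial K b₃ hb₃) hg,
    del1_del3_comm K hb₁ hb₃⟩
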